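/- (Posterior spread bound.) Let C0 be an injective non-negative compact self-adjoint operator and H a non-negative bounded self-adjoint operator on a separable complex Hilbert space X, let Θ be an index function and 0 < m ≤ 1 ≤ M with m‖Θ(C0)u‖ ≤ ‖H^{1/2}u‖ ≤ M‖Θ(C0)u‖ for all u ∈ X. Let f_0 be an index function with f_0(Θ(t)²)² = t on the relevant interval and f_0² operator concave. Then for every α > 0, every δ > 0 and every Hilbert basis (e_i) of X, writing R := (αI + H)^{-1}, the following inequality of (possibly infinite) sums of non-negative terms holds: δ² · Σ_i ⟨C0 (R^{1/2} e_i), R^{1/2} e_i⟩ ≤ (δ²/m²) · Σ_i ⟨f_0²(H) (R^{1/2} e_i), R^{1/2} e_i⟩. -/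

import Mathlib

open scoped InnerProductSpace ENNReal NNReal
noncomputable section

/-- An index function: a continuous function which is non-decreasing and non-negative on
`[0,∞)` and vanishes at `0`. -/
structure IsIndexFun (ψ : ℝ → ℝ) : Prop where
  continuous : Continuous ψ
  monotoneOn : MonotoneOn ψ (Set.Ici 0)
  map_zero : ψ 0 = 0
  nonneg : ∀ t : ℝ, 0 ≤ t → 0 ≤ ψ t

/-- The Loewner-type partial ordering of bounded operators on a complex Hilbert space:
`A ≤ B` iff `⟪A x, x⟫ ≤ ⟪B x, x⟫` for all `x`. -/
def opLE {X : Type*} [NormedAddCommGroup X] [InnerProductSpace ℂ X]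
    (A B : X →L[ℂ] X) : Prop :=
  ∀ x : X, (⟪A x, x⟫_ℂ).re ≤ (⟪B x, x⟫_ℂ).re

/-- Non-negativity of a bounded operator on a complex Hilbert space. -/
def opNonneg {X : Type*} [NormedAddCommGroup X] [InnerProductSpace ℂ X]
    (A : X →L[ℂ] X) : Prop :=
  ∀ x : X, 0 ≤ (⟪A x, x⟫_ℂ).re

/-- `f` is operator concave on `[0, a]`: for all non-negative self-adjoint bounded operators
`G, G'` with spectra contained in `[0, a]` one has `(f(G) + f(G'))/2 ≤ f((G + G')/2)`. -/
def IsOperatorConcaveOn (X : Type*) [NormedAddCommGroup X] [InnerProductSpace ℂ X]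
    [CompleteSpace X] (f : ℝ → ℝ) (a : ℝ) : Prop :=
  ∀ G G' : X →L[ℂ] X, IsSelfAdjoint G → IsSelfAdjoint G' → opNonneg G → opNonneg G' →
    spectrum ℝ G ⊆ Set.Icc 0 a → spectrum ℝ G' ⊆ Set.Icc 0 a →
    opLE ((1/2 : ℂ) • (cfc f G + cfc f G')) (cfc f ((1/2 : ℂ) • (G + G')))

/-- The operator `s_α(H) = α (α I + H)⁻¹`. -/
def sAlpha {X : Type*} [NormedAddCommGroup X] [InnerProductSpace ℂ X] [CompleteSpace X]
    (H : X →L[ℂ] X) (α : ℝ) : X →L[ℂ] X :=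
  (α : ℂ) • Ring.inverse ((α : ℂ) • (1 : X →L[ℂ] X) + H)

/-!
Put `g = f0 ^ 2`, `A = Θ(C0)²` and `B = m⁻² H`, so that `C0 = g(A)` and the link condition reads
`A ≤ B`. Operator concavity on a bounded interval does not make an increasing `g` operator
monotone (`t ↦ 2ct - t²` on `[0, c]`), so `g(A) ≤ g(B)` may fail; for traces, however, scalar
concavity suffices. The link condition forces `H` to be compact, hence `H` has an orthonormal
eigenbasis `(v_j)`, in which the traces may be computed, and Jensen's inequality gives
`⟪g(A) v_j, v_j⟫ ≤ g ⟪A v_j, v_j⟫ ≤ g ⟪B v_j, v_j⟫ = ⟪g(B) v_j, v_j⟫`.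
Functions of `H` such as `(αI + H)^{-1/2}` only rescale `v_j`. Finally
`g(m⁻² t) ≤ m⁻² g(t)` because `g` is concave with `g 0 ≥ 0` and `m ≤ 1`.
-/

section MidpointConcave

theorem nonneg_on_Icc_of_midpoint_le {φ : ℝ → ℝ} (hφ : ContinuousOn φ (Set.Icc 0 1))
    (h0 : 0 ≤ φ 0) (h1 : 0 ≤ φ 1)
    (hmid : ∀ s ∈ Set.Icc (0 : ℝ) 1, ∀ t ∈ Set.Icc (0 : ℝ) 1,
      midpoint ℝ (φ s) (φ t) ≤ φ (midpoint ℝ s t)) :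
    ∀ t ∈ Set.Icc (0 : ℝ) 1, 0 ≤ φ t := by
  -- At the leftmost minimiser `p`, a negative value would force `φ (p - r) = φ p` for small `r`.
  obtain ⟨q, hq, hqmin⟩ := isCompact_Icc.exists_isMinOn (Set.nonempty_Icc.2 zero_le_one) hφ
  obtain ⟨p, ⟨hpI, hpq⟩, hpleast⟩ :=
    (isCompact_Icc.of_isClosed_subset (hφ.preimage_isClosed_of_isClosed isClosed_Icc
      (isClosed_singleton (x := φ q))) Set.inter_subset_left).exists_isLeast ⟨q, hq, rfl⟩
  have hpmin : ∀ t ∈ Set.Icc (0 : ℝ) 1, φ p ≤ φ t := fun t ht ↦ hpq.trans_le (hqmin ht)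
  suffices 0 ≤ φ p from fun t ht ↦ this.trans (hpmin t ht)
  by_contra! hneg
  have hp0 : 0 < p := hpI.1.lt_of_ne (by rintro rfl; exact hneg.not_ge h0)
  have hp1 : p < 1 := hpI.2.lt_of_ne (by rintro rfl; exact hneg.not_ge h1)
  obtain ⟨r, hr0, hr⟩ : ∃ r, 0 < r ∧ r ≤ min p (1 - p) :=
    ⟨_, lt_min hp0 (sub_pos.2 hp1), le_rfl⟩
  obtain ⟨hrp, hrp'⟩ := le_min_iff.1 hr
  have hleft : p - r ∈ Set.Icc (0 : ℝ) 1 := ⟨by linarith, by linarith⟩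
  have hright : p + r ∈ Set.Icc (0 : ℝ) 1 := ⟨by linarith, by linarith⟩
  have hmidp : (φ (p - r) + φ (p + r)) / 2 ≤ φ p := by
    have h := hmid _ hleft _ hright
    rw [midpoint_sub_add, midpoint_eq_smul_add, smul_eq_mul, invOf_eq_inv] at h
    linarith
  have hleft_eq : φ (p - r) = φ q := by
    have : φ p = φ q := hpq
    linarith [hpmin _ hleft, hpmin _ hright]
  linarith [hpleast ⟨hleft, hleft_eq⟩]

theorem concaveOn_of_midpoint_le {E : Type*} [AddCommGroup E] [Module ℝ E] [TopologicalSpace E]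
    [IsTopologicalAddGroup E] [ContinuousSMul ℝ E] {s : Set E} (hs : Convex ℝ s) {g : E → ℝ}
    (hg : ContinuousOn g s)
    (hmid : ∀ x ∈ s, ∀ y ∈ s, midpoint ℝ (g x) (g y) ≤ g (midpoint ℝ x y)) :
    ConcaveOn ℝ s g := by
  refine ⟨hs, fun x hx y hy a b ha hb hab ↦ ?_⟩
  have hmem : ∀ t ∈ Set.Icc (0 : ℝ) 1, AffineMap.lineMap x y t ∈ s :=
    fun t ht ↦ hs.lineMap_mem hx hy ht
  have hgap := nonneg_on_Icc_of_midpoint_le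
    (φ := fun t ↦ g (AffineMap.lineMap x y t) - AffineMap.lineMap (g x) (g y) t)
    ((hg.comp AffineMap.lineMap_continuous.continuousOn hmem).sub
      AffineMap.lineMap_continuous.continuousOn) (by simp) (by simp)
    (fun t ht u hu ↦ by
      have := hmid _ (hmem t ht) _ (hmem u hu)
      rw [← AffineMap.map_midpoint] at this
      simp only [AffineMap.map_midpoint (AffineMap.lineMap (g x) (g y))]
      simp only [midpoint_eq_smul_add, smul_eq_mul] at this ⊢
      linarith)
    b ⟨hb, by linarith⟩
  obtain rfl : a = 1 - b := by linarith
  simpa only [AffineMap.lineMap_apply_module, sub_nonneg] using hgap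

end MidpointConcave

section HilbertBasisSums

variable {𝕜 E F : Type*} [RCLike 𝕜] [NormedAddCommGroup E] [InnerProductSpace 𝕜 E]
  [NormedAddCommGroup F] [InnerProductSpace 𝕜 F] {ι κ : Type*}

theorem tsum_ofReal_norm_inner_sq (e : HilbertBasis ι 𝕜 E) (x : E) :
    ∑' i, ENNReal.ofReal (‖⟪e i, x⟫_𝕜‖ ^ 2) = ENNReal.ofReal (‖x‖ ^ 2) := by
  have hsum : HasSum (fun i ↦ ‖⟪e i, x⟫_𝕜‖ ^ 2) (‖x‖ ^ 2) := by
    simpa only [inner_mul_symm_re_eq_norm, ← inner_conj_symm x (e _), RCLike.conj_mul,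
      ← RCLike.ofReal_pow, RCLike.ofReal_re, inner_self_eq_norm_sq] using
      RCLike.hasSum_re 𝕜 (e.hasSum_inner_mul_inner x x)
  rw [← hsum.tsum_eq, ENNReal.ofReal_tsum_of_nonneg (fun _ ↦ by positivity) hsum.summable]

theorem tsum_ofReal_norm_map_sq_eq_adjoint [CompleteSpace E] [CompleteSpace F]
    (e : HilbertBasis ι 𝕜 E) (b : HilbertBasis κ 𝕜 F) (T : E →L[𝕜] F) :
    ∑' i, ENNReal.ofReal (‖T (e i)‖ ^ 2) =
      ∑' j, ENNReal.ofReal (‖ContinuousLinearMap.adjoint T (b j)‖ ^ 2) := by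
  simp_rw [← tsum_ofReal_norm_inner_sq b (T _),
    ← tsum_ofReal_norm_inner_sq e (ContinuousLinearMap.adjoint T _),
    ContinuousLinearMap.adjoint_inner_right, norm_inner_symm (T _)]
  exact ENNReal.tsum_comm

theorem tsum_ofReal_norm_map_sq_eq [CompleteSpace E] [CompleteSpace F]
    (e : HilbertBasis ι 𝕜 E) (b : HilbertBasis κ 𝕜 E) (T : E →L[𝕜] F) :
    ∑' i, ENNReal.ofReal (‖T (e i)‖ ^ 2) = ∑' j, ENNReal.ofReal (‖T (b j)‖ ^ 2) := by
  obtain ⟨_, c, -⟩ := exists_hilbertBasis 𝕜 F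
  rw [tsum_ofReal_norm_map_sq_eq_adjoint e c, tsum_ofReal_norm_map_sq_eq_adjoint b c]

end HilbertBasisSums

section Eigenbasis

universe u v w

variable {𝕜 : Type u} {E : Type v} [RCLike 𝕜] [NormedAddCommGroup E] [InnerProductSpace 𝕜 E]
  [CompleteSpace E]

theorem exists_hilbertBasis_mem_of_orthogonalFamily {ι : Type w} {V : ι → Submodule 𝕜 E}
    [∀ i, CompleteSpace (V i)]
    (hV : OrthogonalFamily 𝕜 (fun i ↦ V i) fun i ↦ (V i).subtypeₗᵢ) (hV' : (⨆ i, V i)ᗮ = ⊥) :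
    ∃ (κ : Type (max v w)) (b : HilbertBasis κ 𝕜 E), ∀ j, ∃ i, b j ∈ V i := by
  choose s c _ using fun i ↦ exists_hilbertBasis 𝕜 (V i)
  have horth := hV.orthonormal_sigma_orthonormal (fun i ↦ (c i).orthonormal)
  set f : (Σ i, s i) → E := fun a ↦ (V a.1).subtypeₗᵢ (c a.1 a.2)
  have hcomplete : (Submodule.span 𝕜 (Set.range f))ᗮ = ⊥ := by
    rw [eq_bot_iff, ← hV', ← Submodule.iInf_orthogonal, le_iInf_iff]
    intro i x hx
    rw [← Submodule.orthogonalProjectionOnto_eq_zero_iff, ← (c i).repr.map_eq_zero_iff]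
    ext j
    rw [(c i).repr_apply_apply, Submodule.inner_orthogonalProjectionOnto_eq_of_mem_left]
    exact hx _ (Submodule.subset_span ⟨⟨i, j⟩, rfl⟩)
  refine ⟨_, HilbertBasis.mkOfOrthogonalEqBot horth hcomplete, fun j ↦ ⟨j.1, ?_⟩⟩
  rw [HilbertBasis.coe_mkOfOrthogonalEqBot]
  exact (c j.1 j.2).2

theorem exists_hilbertBasis_eigenvectors {T : E →L[𝕜] E} (hT : IsSelfAdjoint T)
    (hTc : IsCompactOperator T) :
    ∃ (κ : Type (max u v)) (b : HilbertBasis κ 𝕜 E) (μ : κ → ℝ),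
      ∀ j, T (b j) = (μ j : 𝕜) • b j := by
  have hsymm := hT.isSymmetric
  have hclosed (μ : 𝕜) : CompleteSpace (Module.End.eigenspace (T : Module.End 𝕜 E) μ) :=
    (ContinuousLinearMap.isClosed_eigenspace T μ).completeSpace_coe
  obtain ⟨κ, b, hb⟩ := exists_hilbertBasis_mem_of_orthogonalFamily
    hsymm.orthogonalFamily_eigenspaces
    (ContinuousLinearMap.orthogonalComplement_iSup_eigenspaces_eq_bot hTc hsymm)
  choose μ hμ using hb
  refine ⟨κ, b, fun j ↦ RCLike.re (μ j), fun j ↦ ?_⟩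
  have hreal : ((RCLike.re (μ j) : ℝ) : 𝕜) = μ j := RCLike.conj_eq_iff_re.1 <|
    hsymm.conj_eigenvalue_eq_self <|
      Module.End.hasEigenvalue_of_hasEigenvector ⟨hμ j, b.orthonormal.ne_zero j⟩
  rw [hreal]
  exact Module.End.mem_eigenspace_iff.1 (hμ j)

end Eigenbasis

section CompactOperators

theorem isCompactOperator_of_norm_le {𝕜 E F G : Type*} [NontriviallyNormedField 𝕜]
    [NormedAddCommGroup E] [NormedSpace 𝕜 E] [NormedAddCommGroup F] [NormedSpace 𝕜 F]
    [CompleteSpace F] [NormedAddCommGroup G] [NormedSpace 𝕜 G]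
    {S : E →L[𝕜] F} {K : E →L[𝕜] G} (hK : IsCompactOperator K) {M : ℝ}
    (hSK : ∀ u, ‖S u‖ ≤ M * ‖K u‖) : IsCompactOperator S := by
  have hKball : TotallyBounded (K '' Metric.ball 0 1) :=
    (hK.isCompact_closure_image_ball (f := (K : E →ₗ[𝕜] G)) 1).totallyBounded.subset
      subset_closure
  suffices TotallyBounded (S '' Metric.ball 0 1) from
    (isCompactOperator_iff_isCompact_closure_image_ball (S : E →ₗ[𝕜] F) one_pos).2
      (this.closure.isCompact_of_isClosed isClosed_closure)
  refine Metric.totallyBounded_iff.2 fun ε hε ↦ ?_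
  obtain ⟨t, htball, htfin, hcover⟩ :=
    Metric.finite_approx_of_totallyBounded hKball (ε / (|M| + 1)) (by positivity)
  obtain ⟨s, -, hsfin, rfl⟩ := htfin.exists_subset_finite_image_eq htball
  refine ⟨S '' s, hsfin.image S, ?_⟩
  rintro _ ⟨u, hu, rfl⟩
  obtain ⟨w, hw, huw⟩ : ∃ w ∈ s, ‖K (u - w)‖ < ε / (|M| + 1) := by
    simpa [dist_eq_norm] using hcover ⟨u, hu, rfl⟩
  refine Set.mem_biUnion (Set.mem_image_of_mem S hw) ?_
  rw [Metric.mem_ball, dist_eq_norm, ← map_sub]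
  calc ‖S (u - w)‖ ≤ M * ‖K (u - w)‖ := hSK _
    _ ≤ (|M| + 1) * ‖K (u - w)‖ := by gcongr; linarith [le_abs_self M]
    _ < ε := by rwa [lt_div_iff₀' (by positivity)] at huw

end CompactOperators

section FunctionalCalculus

variable {X : Type*} [NormedAddCommGroup X] [InnerProductSpace ℂ X] {A B T : X →L[ℂ] X}

theorem opLE_of_le (hAB : A ≤ B) : opLE A B := fun x ↦ by
  simpa [inner_sub_left] using ((ContinuousLinearMap.le_def A B).1 hAB).re_inner_nonneg_left x

theorem re_inner_real_smul_apply (r : ℝ) (v : X) :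
    (⟪(r • T) v, v⟫_ℂ).re = r * (⟪T v, v⟫_ℂ).re := by
  rw [smul_apply, ← Complex.coe_smul, inner_smul_left, Complex.conj_ofReal, Complex.re_ofReal_mul]

theorem re_inner_algebraMap (r : ℝ) (v : X) :
    (⟪algebraMap ℝ (X →L[ℂ] X) r v, v⟫_ℂ).re = r * ‖v‖ ^ 2 := by
  rw [Algebra.algebraMap_eq_smul_one, re_inner_real_smul_apply]
  exact congrArg (r * ·) (inner_self_eq_norm_sq (𝕜 := ℂ) v)

variable [CompleteSpace X]

theorem opNonneg.nonneg (hT : opNonneg T) (hTsa : IsSelfAdjoint T) : 0 ≤ T :=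
  (ContinuousLinearMap.nonneg_iff_isPositive T).2 <|
    ContinuousLinearMap.isPositive_def'.2 ⟨hTsa, hT⟩

theorem le_of_opLE (hA : IsSelfAdjoint A) (hB : IsSelfAdjoint B) (hAB : opLE A B) : A ≤ B :=
  sub_nonneg.1 <| opNonneg.nonneg
    (fun x ↦ by simpa [inner_sub_left] using hAB x) (hB.sub hA)

theorem re_inner_cfc_mul_self (f : ℝ → ℝ) (v : X) :
    (⟪(cfc f T * cfc f T) v, v⟫_ℂ).re = ‖cfc f T v‖ ^ 2 := by
  have hsymm := (cfc_predicate f T : IsSelfAdjoint (cfc f T)).isSymmetric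
  exact congrArg Complex.re (hsymm (cfc f T v) v) |>.trans (inner_self_eq_norm_sq (𝕜 := ℂ) _)

theorem cfc_sqrt_mul_self (hT : 0 ≤ T) : cfc Real.sqrt T * cfc Real.sqrt T = T := by
  have hTsa : IsSelfAdjoint T := hT.isSelfAdjoint
  calc cfc Real.sqrt T * cfc Real.sqrt T = cfc (fun t ↦ √t * √t) T := (cfc_mul ..).symm
    _ = cfc (fun t ↦ t) T :=
      cfc_congr fun t ht ↦ Real.mul_self_sqrt (spectrum_nonneg_of_nonneg hT ht)
    _ = T := cfc_id' ℝ T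

theorem re_inner_eq_norm_cfc_sqrt_sq (hT : 0 ≤ T) (v : X) :
    (⟪T v, v⟫_ℂ).re = ‖cfc Real.sqrt T v‖ ^ 2 := by
  rw [← re_inner_cfc_mul_self, cfc_sqrt_mul_self hT]

theorem tsum_ofReal_re_inner_eq {ι κ : Type*} (hA : 0 ≤ A) (e : HilbertBasis ι ℂ X)
    (b : HilbertBasis κ ℂ X) :
    ∑' i, ENNReal.ofReal (⟪A (T (e i)), T (e i)⟫_ℂ).re =
      ∑' j, ENNReal.ofReal (⟪A (T (b j)), T (b j)⟫_ℂ).re := by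
  simp_rw [re_inner_eq_norm_cfc_sqrt_sq hA]
  exact tsum_ofReal_norm_map_sq_eq e b (cfc Real.sqrt A * T)

theorem mem_spectrum_of_apply_eq_smul {v : X} (hv : v ≠ 0) {r : ℝ} (hTv : T v = (r : ℂ) • v) :
    r ∈ spectrum ℝ T := by
  rw [spectrum.mem_iff]
  intro hunit
  refine hv ((ContinuousLinearMap.isUnit_iff_bijective.1 hunit).1 ?_)
  simp [hTv, Algebra.algebraMap_eq_smul_one]

theorem cfc_apply_of_apply_eq_smul (hT : IsSelfAdjoint T) {v : X} (hv : v ≠ 0) {r : ℝ}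
    (hTv : T v = (r : ℂ) • v) {f : ℝ → ℝ} (hf : ContinuousOn f (spectrum ℝ T)) :
    cfc f T v = (f r : ℂ) • v := by
  have hr := mem_spectrum_of_apply_eq_smul hv hTv
  suffices ∀ φ : C(spectrum ℝ T, ℝ), cfcHom hT φ v = (φ ⟨r, hr⟩ : ℂ) • v by
    rw [cfc_apply f T hT hf]
    exact this _
  intro φ
  induction φ using ContinuousMap.induction_on_of_compact with
  | const s =>
    have hconst : cfcHom hT (ContinuousMap.const _ s) = algebraMap ℝ (X →L[ℂ] X) s :=
      AlgHomClass.commutes (cfcHom hT) s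
    simp [hconst, Algebra.algebraMap_eq_smul_one]
  | id =>
    simpa using (congrArg (· v) (cfcHom_id (R := ℝ) hT)).trans hTv
  | star_id =>
    have hid : cfcHom hT (star ((ContinuousMap.id ℝ).restrict (spectrum ℝ T))) = T := by
      rw [map_star, cfcHom_id (R := ℝ) hT, hT.star_eq]
    simpa using (congrArg (· v) hid).trans hTv
  | add φ ψ hφ hψ => simp [hφ, hψ, add_smul]
  | mul φ ψ hφ hψ =>
    rw [map_mul, mul_apply_eq_comp, hψ, map_smul, hφ, smul_smul, mul_comm, ContinuousMap.mul_apply,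
      Complex.ofReal_mul]
  | frequently φ hφ =>
    have hclosed : IsClosed {ψ : C(spectrum ℝ T, ℝ) | cfcHom hT ψ v = (ψ ⟨r, hr⟩ : ℂ) • v} :=
      isClosed_eq ((cfcHom_continuous (R := ℝ) hT).clm_apply continuous_const) (by fun_prop)
    exact hclosed.mem_of_frequently_of_tendsto hφ Filter.tendsto_id

theorem isCompactOperator_cfc (hT : IsSelfAdjoint T) (hTc : IsCompactOperator T) {f : ℝ → ℝ}
    (hf : ContinuousOn f (quasispectrum ℝ T)) (hf0 : f 0 = 0) :
    IsCompactOperator (cfc f T : X →L[ℂ] X) := by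
  let S : NonUnitalStarSubalgebra ℝ (X →L[ℂ] X) :=
    { carrier := {A | IsCompactOperator A ∧ IsCompactOperator ⇑(star A)}
      add_mem' := fun {A B} hA hB ↦ ⟨hA.1.add hB.1, star_add A B ▸ hA.2.add hB.2⟩
      zero_mem' := ⟨isCompactOperator_zero, (star_zero (X →L[ℂ] X)).symm ▸ isCompactOperator_zero⟩
      mul_mem' := fun {A B} hA hB ↦ ⟨hA.1.comp_clm B, star_mul A B ▸ hB.2.comp_clm (star A)⟩
      smul_mem' := fun r A hA ↦ ⟨hA.1.smul r, star_smul r A ▸ hA.2.smul _⟩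
      star_mem' := fun {A} hA ↦ ⟨hA.2, (star_star A).symm ▸ hA.1⟩ }
  have hclosed : IsClosed {A : X →L[ℂ] X | IsCompactOperator A} :=
    isClosed_setOfPred_isCompactOperator
  have hSclosed : IsClosed (S : Set (X →L[ℂ] X)) :=
    hclosed.inter (hclosed.preimage continuous_star)
  rw [← cfcₙ_eq_cfc hf hf0]
  exact (cfcₙ_mem (𝕜' := ℝ) (hs := hSclosed) (s := S) f ⟨hTc, hT.star_eq.symm ▸ hTc⟩).1

theorem re_inner_mem_Icc {a b : ℝ} (hA : IsSelfAdjoint A) (hAab : spectrum ℝ A ⊆ Set.Icc a b)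
    {v : X} (hv : ‖v‖ = 1) : (⟪A v, v⟫_ℂ).re ∈ Set.Icc a b := by
  have hlow := opLE_of_le ((algebraMap_le_iff_le_spectrum hA).2 fun t ht ↦ (hAab ht).1) v
  have hupp := opLE_of_le ((le_algebraMap_iff_spectrum_le hA).2 fun t ht ↦ (hAab ht).2) v
  simp only [re_inner_algebraMap, hv, one_pow, mul_one] at hlow hupp
  exact ⟨hlow, hupp⟩

theorem re_inner_cfc_affine (hA : IsSelfAdjoint A) (p q : ℝ) {v : X} (hv : ‖v‖ = 1) :
    (⟪cfc (fun t ↦ p * t + q) A v, v⟫_ℂ).re = p * (⟪A v, v⟫_ℂ).re + q := by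
  rw [cfc_add_const .., cfc_const_mul_id .., add_apply, inner_add_left, Complex.add_re,
    re_inner_real_smul_apply, re_inner_algebraMap, hv, one_pow, mul_one]

theorem re_inner_cfc_le_of_concaveOn {a b : ℝ} (hA : IsSelfAdjoint A)
    (hAab : spectrum ℝ A ⊆ Set.Icc a b) {g : ℝ → ℝ} (hg : ContinuousOn g (Set.Icc a b))
    (hconc : ConcaveOn ℝ (Set.Icc a b) g) {v : X} (hv : ‖v‖ = 1) :
    (⟪cfc g A v, v⟫_ℂ).re ≤ g (⟪A v, v⟫_ℂ).re := by
  refine le_of_forall_gt_imp_ge_of_dense fun r hr ↦ ?_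
  obtain ⟨p, q, hpq, hpqr⟩ := hconc.neg.exists_affine_le_of_lt_real (f := -g) (a := -r)
    (re_inner_mem_Icc hA hAab hv) (neg_lt_neg hr) isClosed_Icc hg.neg.lowerSemicontinuousOn
  have hmono : cfc g A ≤ cfc (fun t ↦ -p * t + -q) A :=
    cfc_mono (fun t ht ↦ by linarith [hpq t (hAab ht), Pi.neg_apply g t]) (hg.mono hAab)
  have hmajor := opLE_of_le hmono v
  rw [re_inner_cfc_affine hA _ _ hv] at hmajor
  linarith

theorem cfc_inv_smul_le_of_concaveOn {b q : ℝ} (hT : 0 ≤ T) (hq : 0 < q) (hq1 : q ≤ 1)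
    {g : ℝ → ℝ} (hg : ContinuousOn g (Set.Icc 0 b)) (hconc : ConcaveOn ℝ (Set.Icc 0 b) g)
    (hg0 : 0 ≤ g 0) (hqT : spectrum ℝ (q⁻¹ • T) ⊆ Set.Icc 0 b) :
    cfc g (q⁻¹ • T) ≤ q⁻¹ • cfc g T := by
  have hTsa : IsSelfAdjoint T := hT.isSelfAdjoint
  have hTb : ∀ t ∈ spectrum ℝ T, q⁻¹ * t ∈ Set.Icc 0 b := fun t ht ↦
    hqT (spectrum.smul_mem_smul_iff (r := Units.mk0 q⁻¹ (inv_ne_zero hq.ne')).2 ht)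
  have hTb' : spectrum ℝ T ⊆ Set.Icc 0 b := fun t ht ↦
    ⟨spectrum_nonneg_of_nonneg hT ht,
      (le_mul_of_one_le_left (spectrum_nonneg_of_nonneg hT ht) (one_le_inv_iff₀.2 ⟨hq, hq1⟩)).trans
        (hTb t ht).2⟩
  have hpoint : ∀ t ∈ spectrum ℝ T, g (q⁻¹ * t) ≤ q⁻¹ * g t := fun t ht ↦ by
    have h0b : (0 : ℝ) ∈ Set.Icc 0 b := ⟨le_rfl, (hTb t ht).1.trans (hTb t ht).2⟩
    have hcomb := hconc.2 (hTb t ht) h0b hq.le (sub_nonneg.2 hq1) (add_sub_cancel q 1)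
    simp only [smul_eq_mul, mul_zero, add_zero, mul_inv_cancel_left₀ hq.ne'] at hcomb
    rw [le_inv_mul_iff₀ hq]
    linarith [mul_nonneg (sub_nonneg.2 hq1) hg0]
  rw [← cfc_comp_const_mul q⁻¹ g T (hg.mono (Set.image_subset_iff.2 hTb)),
    ← cfc_smul q⁻¹ g T (hg.mono hTb')]
  exact cfc_mono hpoint (hg.comp (by fun_prop) hTb) ((hg.mono hTb').const_smul q⁻¹)

theorem spectrum_subset_Icc_zero_of_le (hA : 0 ≤ A) {c : ℝ}
    (hAc : A ≤ algebraMap ℝ (X →L[ℂ] X) c) : spectrum ℝ A ⊆ Set.Icc 0 c := fun t ht ↦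
  ⟨spectrum_nonneg_of_nonneg hA ht,
    (le_algebraMap_iff_spectrum_le hA.isSelfAdjoint).1 hAc t ht⟩

theorem tsum_ofReal_re_inner_cfc_le {ι κ : Type*} {a c : ℝ}
    (hA : IsSelfAdjoint A) (hB : IsSelfAdjoint B) (hAac : spectrum ℝ A ⊆ Set.Icc a c)
    (hBac : spectrum ℝ B ⊆ Set.Icc a c) (hAB : A ≤ B) {g : ℝ → ℝ}
    (hg : ContinuousOn g (Set.Icc a c)) (hgmono : MonotoneOn g (Set.Icc a c))
    (hgconc : ConcaveOn ℝ (Set.Icc a c) g) (hga : 0 ≤ g a)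
    (b : HilbertBasis κ ℂ X) {β ρ : κ → ℝ} (hBb : ∀ j, B (b j) = (β j : ℂ) • b j)
    (hTb : ∀ j, T (b j) = (ρ j : ℂ) • b j) (e : HilbertBasis ι ℂ X) :
    ∑' i, ENNReal.ofReal (⟪cfc g A (T (e i)), T (e i)⟫_ℂ).re ≤
      ∑' i, ENNReal.ofReal (⟪cfc g B (T (e i)), T (e i)⟫_ℂ).re := by
  have heig : ∀ j, (⟪cfc g A (b j), b j⟫_ℂ).re ≤ (⟪cfc g B (b j), b j⟫_ℂ).re := fun j ↦ by
    have hnorm : ‖b j‖ = 1 := b.orthonormal.1 j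
    have hBj : (⟪B (b j), b j⟫_ℂ).re = β j := by
      simp [hBb, hnorm]
    calc (⟪cfc g A (b j), b j⟫_ℂ).re ≤ g (⟪A (b j), b j⟫_ℂ).re :=
          re_inner_cfc_le_of_concaveOn hA hAac hg hgconc hnorm
      _ ≤ g (⟪B (b j), b j⟫_ℂ).re :=
          hgmono (re_inner_mem_Icc hA hAac hnorm) (re_inner_mem_Icc hB hBac hnorm)
            (opLE_of_le hAB _)
      _ = (⟪cfc g B (b j), b j⟫_ℂ).re := by
          rw [cfc_apply_of_apply_eq_smul hB (b.orthonormal.ne_zero j) (hBb j) (hg.mono hBac), hBj]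
          simp [hnorm]
  have hgnn : ∀ t ∈ Set.Icc a c, 0 ≤ g t := fun t ht ↦
    hga.trans (hgmono (Set.left_mem_Icc.2 (ht.1.trans ht.2)) ht ht.1)
  rw [tsum_ofReal_re_inner_eq (cfc_nonneg fun t ht ↦ hgnn t (hAac ht)) e b,
    tsum_ofReal_re_inner_eq (cfc_nonneg fun t ht ↦ hgnn t (hBac ht)) e b]
  refine ENNReal.tsum_le_tsum fun j ↦ ENNReal.ofReal_le_ofReal ?_
  simp only [hTb, map_smul, inner_smul_left, inner_smul_right, Complex.conj_ofReal, ← mul_assoc,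
    ← Complex.ofReal_mul, Complex.re_ofReal_mul]
  exact mul_le_mul_of_nonneg_left (heig j) (mul_self_nonneg _)

end FunctionalCalculus

section SpreadBound

variable {X : Type*} [NormedAddCommGroup X] [InnerProductSpace ℂ X] [CompleteSpace X]

theorem IsIndexFun.monotoneOn_sq {ψ : ℝ → ℝ} (hψ : IsIndexFun ψ) :
    MonotoneOn (fun t ↦ ψ t ^ 2) (Set.Ici 0) := fun s hs _ ht hst ↦
  pow_le_pow_left₀ (hψ.nonneg s hs) (hψ.monotoneOn hs ht hst) 2

theorem IsOperatorConcaveOn.concaveOn [Nontrivial X] {g : ℝ → ℝ} {c : ℝ}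
    (hconc : IsOperatorConcaveOn X g c) (hg : ContinuousOn g (Set.Icc 0 c)) :
    ConcaveOn ℝ (Set.Icc 0 c) g := by
  refine concaveOn_of_midpoint_le (convex_Icc 0 c) hg fun s hs t ht ↦ ?_
  have hsa (r : ℝ) : IsSelfAdjoint (algebraMap ℝ (X →L[ℂ] X) r) := .algebraMap _ (.all r)
  have hnn {r : ℝ} (hr : r ∈ Set.Icc 0 c) : opNonneg (algebraMap ℝ (X →L[ℂ] X) r) := fun x ↦ by
    rw [re_inner_algebraMap]
    exact mul_nonneg hr.1 (sq_nonneg _)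
  have hspec {r : ℝ} (hr : r ∈ Set.Icc 0 c) :
      spectrum ℝ (algebraMap ℝ (X →L[ℂ] X) r) ⊆ Set.Icc 0 c := by
    rwa [spectrum.scalar_eq, Set.singleton_subset_iff]
  have hhalf (p q : ℝ) : (1 / 2 : ℂ) • (algebraMap ℝ (X →L[ℂ] X) p + algebraMap ℝ (X →L[ℂ] X) q) =
      algebraMap ℝ (X →L[ℂ] X) (midpoint ℝ p q) := by
    rw [← map_add, midpoint_eq_smul_add, smul_eq_mul, map_mul, ← Algebra.smul_def,
      ← Complex.coe_smul]
    simp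
  obtain ⟨v, hv⟩ := exists_norm_eq X zero_le_one
  have hscalar := hconc _ _ (hsa s) (hsa t) (hnn hs) (hnn ht) (hspec hs) (hspec ht) v
  simpa only [cfc_algebraMap, hhalf, re_inner_algebraMap, hv, one_pow, mul_one] using hscalar

theorem isCompactOperator_of_norm_cfc_sqrt_le {C H : X →L[ℂ] X} (hC : IsSelfAdjoint C)
    (hCc : IsCompactOperator C) (hH : 0 ≤ H) {Θ : ℝ → ℝ}
    (hΘ : ContinuousOn Θ (quasispectrum ℝ C)) (hΘ0 : Θ 0 = 0) {M : ℝ}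
    (hlink : ∀ u, ‖cfc Real.sqrt H u‖ ≤ M * ‖cfc Θ C u‖) : IsCompactOperator H := by
  have hsqrt : IsCompactOperator (cfc Real.sqrt H : X →L[ℂ] X) :=
    isCompactOperator_of_norm_le (isCompactOperator_cfc hC hCc hΘ hΘ0) hlink
  rw [← cfc_sqrt_mul_self hH]
  exact hsqrt.comp_clm (cfc Real.sqrt H)

theorem cfc_sq_le_inv_smul_of_norm_le {C H : X →L[ℂ] X} (hH : 0 ≤ H)
    {Θ : ℝ → ℝ} (hΘ : ContinuousOn Θ (spectrum ℝ C)) {m : ℝ} (hm : 0 < m)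
    (hlink : ∀ u, m * ‖cfc Θ C u‖ ≤ ‖cfc Real.sqrt H u‖) :
    cfc (fun t ↦ Θ t ^ 2) C ≤ (m ^ 2)⁻¹ • H := by
  have hmH : 0 ≤ (m ^ 2)⁻¹ • H := smul_nonneg (by positivity) hH
  refine le_of_opLE (cfc_predicate _ _) hmH.isSelfAdjoint fun u ↦ ?_
  simp_rw [sq (Θ _)]
  rw [cfc_mul Θ Θ C hΘ hΘ, re_inner_cfc_mul_self, re_inner_real_smul_apply,
    re_inner_eq_norm_cfc_sqrt_sq hH, le_inv_mul_iff₀ (by positivity), ← mul_pow]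
  exact pow_le_pow_left₀ (by positivity) (hlink u) 2

theorem add_ne_zero_of_mem_spectrum {H : X →L[ℂ] X} (hH : 0 ≤ H) {α t : ℝ} (hα : 0 < α)
    (ht : t ∈ spectrum ℝ H) : α + t ≠ 0 :=
  (add_pos_of_pos_of_nonneg hα (spectrum_nonneg_of_nonneg hH ht)).ne'

theorem continuousOn_inv_add_spectrum {H : X →L[ℂ] X} (hH : 0 ≤ H) {α : ℝ} (hα : 0 < α) :
    ContinuousOn (fun t ↦ (α + t)⁻¹) (spectrum ℝ H) :=
  ContinuousOn.inv₀ (by fun_prop) fun _ ↦ add_ne_zero_of_mem_spectrum hH hα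

theorem cfc_sqrt_inverse_smul_one_add {H : X →L[ℂ] X} (hH : 0 ≤ H) {α : ℝ} (hα : 0 < α) :
    cfc Real.sqrt (Ring.inverse ((α : ℂ) • (1 : X →L[ℂ] X) + H)) =
      cfc (fun t ↦ √((α + t)⁻¹)) H := by
  have hHsa : IsSelfAdjoint H := hH.isSelfAdjoint
  have hshift : (α : ℂ) • (1 : X →L[ℂ] X) + H = cfc (fun t ↦ α + t) H := by
    rw [cfc_const_add α (fun t ↦ t) H, cfc_id' ℝ H, Algebra.algebraMap_eq_smul_one,
      Complex.coe_smul]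
  rw [hshift, ← cfc_inv (fun t ↦ α + t) H (fun _ ↦ add_ne_zero_of_mem_spectrum hH hα),
    ← cfc_comp' Real.sqrt _ H Real.continuous_sqrt.continuousOn
      (continuousOn_inv_add_spectrum hH hα)]

theorem statement10_general {C H : X →L[ℂ] X} (hC : IsSelfAdjoint C) (hH : 0 ≤ H)
    (hHc : IsCompactOperator H) {Θ : ℝ → ℝ} (hΘ : ContinuousOn Θ (spectrum ℝ C))
    {m : ℝ} (hm : 0 < m) (hm1 : m ≤ 1) (hlink : ∀ u, m * ‖cfc Θ C u‖ ≤ ‖cfc Real.sqrt H u‖)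
    {c : ℝ} (hc : ‖H‖ / m ^ 2 ≤ c) {g : ℝ → ℝ} (hg : ContinuousOn g (Set.Icc 0 c))
    (hgmono : MonotoneOn g (Set.Icc 0 c)) (hgconc : ConcaveOn ℝ (Set.Icc 0 c) g) (hg0 : 0 ≤ g 0)
    (hgΘ : ∀ t ∈ spectrum ℝ C, g (Θ t ^ 2) = t)
    {φ : ℝ → ℝ} (hφ : ContinuousOn φ (spectrum ℝ H)) (δ : ℝ)
    {ι : Type*} (e : HilbertBasis ι ℂ X) :
    ENNReal.ofReal (δ ^ 2) *
        ∑' i, ENNReal.ofReal (⟪C (cfc φ H (e i)), cfc φ H (e i)⟫_ℂ).re ≤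
      ENNReal.ofReal (δ ^ 2 / m ^ 2) *
        ∑' i, ENNReal.ofReal (⟪cfc g H (cfc φ H (e i)), cfc φ H (e i)⟫_ℂ).re := by
  set A := cfc (fun t ↦ Θ t ^ 2) C with hA
  set B := (m ^ 2)⁻¹ • H with hB
  have hA0 : 0 ≤ A := cfc_nonneg fun t _ ↦ sq_nonneg (Θ t)
  have hB0 : 0 ≤ B := smul_nonneg (by positivity) hH
  have hAB : A ≤ B := cfc_sq_le_inv_smul_of_norm_le hH hΘ hm hlink
  have hBc : B ≤ algebraMap ℝ (X →L[ℂ] X) c := by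
    refine (IsSelfAdjoint.le_algebraMap_norm_self hB0.isSelfAdjoint).trans (algebraMap_mono _ ?_)
    rwa [norm_smul, Real.norm_of_nonneg (by positivity), inv_mul_eq_div]
  have hAspec := spectrum_subset_Icc_zero_of_le hA0 (hAB.trans hBc)
  have hBspec := spectrum_subset_Icc_zero_of_le hB0 hBc
  have hCA : cfc g A = C := by
    have himage : (fun t ↦ Θ t ^ 2) '' spectrum ℝ C ⊆ Set.Icc 0 c := by
      rwa [← cfc_map_spectrum (fun t ↦ Θ t ^ 2) C hC (hΘ.pow 2)]
    rw [hA, ← cfc_comp' g _ C (hg.mono himage) (hΘ.pow 2), cfc_congr hgΘ, cfc_id' ℝ C]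
  have hscale : cfc g B ≤ (m ^ 2)⁻¹ • cfc g H :=
    cfc_inv_smul_le_of_concaveOn hH (by positivity) (pow_le_one₀ hm.le hm1) hg hgconc hg0 hBspec
  obtain ⟨κ, b, μ, hμ⟩ := exists_hilbertBasis_eigenvectors hH.isSelfAdjoint hHc
  have htrace := tsum_ofReal_re_inner_cfc_le hA0.isSelfAdjoint hB0.isSelfAdjoint hAspec hBspec hAB
    hg hgmono hgconc hg0 b (β := fun j ↦ (m ^ 2)⁻¹ * μ j)
    (fun j ↦ by simp [hB, hμ, smul_smul, ← Complex.coe_smul])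
    (fun j ↦ cfc_apply_of_apply_eq_smul hH.isSelfAdjoint (b.orthonormal.ne_zero j) (hμ j) hφ) e
  rw [hCA] at htrace
  rw [div_eq_mul_inv, ENNReal.ofReal_mul (sq_nonneg δ), mul_assoc]
  gcongr
  rw [← ENNReal.tsum_mul_left]
  refine htrace.trans (ENNReal.tsum_le_tsum fun i ↦ ?_)
  rw [← ENNReal.ofReal_mul (by positivity)]
  exact ENNReal.ofReal_le_ofReal <|
    (opLE_of_le hscale _).trans_eq (re_inner_real_smul_apply _ _)

end SpreadBound

/-- Proposition: posterior spread bound: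
`δ² tr[(αI + H)⁻¹ C0] ≤ (δ²/m²) tr[(αI + H)⁻¹ f₀²(H)]`, stated via the traces
`Σ_i ⟪G (R^{1/2} e_i), R^{1/2} e_i⟫` over an arbitrary Hilbert basis `(e_i)`. -/
theorem statement10
    {X : Type*} [NormedAddCommGroup X] [InnerProductSpace ℂ X] [CompleteSpace X]
    [TopologicalSpace.SeparableSpace X]
    (C0 H : X →L[ℂ] X)
    (hC0sa : IsSelfAdjoint C0) (hC0nn : opNonneg C0)
    (hC0cpt : IsCompactOperator (⇑C0)) (hC0inj : Function.Injective (⇑C0))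
    (hHsa : IsSelfAdjoint H) (hHnn : opNonneg H)
    (Θ : ℝ → ℝ) (hΘ : IsIndexFun Θ)
    (m M : ℝ) (hm : 0 < m) (hm1 : m ≤ 1) (hM : 1 ≤ M)
    (hlink : ∀ u : X, m * ‖cfc Θ C0 u‖ ≤ ‖cfc Real.sqrt H u‖ ∧
      ‖cfc Real.sqrt H u‖ ≤ M * ‖cfc Θ C0 u‖)
    (f0 : ℝ → ℝ) (hf0 : IsIndexFun f0)
    (hf0Θ : ∀ t ∈ Set.Icc (0:ℝ) ‖C0‖, (f0 ((Θ t)^2))^2 = t)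
    (c : ℝ) (hc : ‖H‖ / m^2 ≤ c)
    (hconcf0 : IsOperatorConcaveOn X (fun t => (f0 t)^2) c)
    (α δ : ℝ) (hα : 0 < α) (hδ : 0 < δ)
    {ι : Type*} (e : HilbertBasis ι ℂ X)
    (Rh : X →L[ℂ] X)
    (hRh : Rh = cfc Real.sqrt (Ring.inverse ((α : ℂ) • (1 : X →L[ℂ] X) + H))) :
    ENNReal.ofReal (δ^2) *
        ∑' i : ι, ENNReal.ofReal ((⟪C0 (Rh (e i)), Rh (e i)⟫_ℂ).re)
      ≤ ENNReal.ofReal (δ^2 / m^2) *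
        ∑' i : ι, ENNReal.ofReal
          ((⟪cfc (fun t => (f0 t)^2) H (Rh (e i)), Rh (e i)⟫_ℂ).re) := by
  rcases subsingleton_or_nontrivial X with hX | hX
  · simp [Subsingleton.elim (Rh (e _)) 0]
  have hH : 0 ≤ H := hHnn.nonneg hHsa
  have hHc : IsCompactOperator H := isCompactOperator_of_norm_cfc_sqrt_le hC0sa hC0cpt hH
    hΘ.continuous.continuousOn hΘ.map_zero fun u ↦ (hlink u).2
  have hg : Continuous fun t ↦ f0 t ^ 2 := hf0.continuous.pow 2
  have hC0spec : spectrum ℝ C0 ⊆ Set.Icc 0 ‖C0‖ := spectrum_subset_Icc_zero_of_le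
    (hC0nn.nonneg hC0sa) (IsSelfAdjoint.le_algebraMap_norm_self hC0sa)
  rw [hRh, cfc_sqrt_inverse_smul_one_add hH hα]
  exact statement10_general hC0sa hH hHc hΘ.continuous.continuousOn hm hm1 (fun u ↦ (hlink u).1) hc
    hg.continuousOn (hf0.monotoneOn_sq.mono Set.Icc_subset_Ici_self)
    (hconcf0.concaveOn hg.continuousOn) (sq_nonneg _)
    (fun t ht ↦ hf0Θ t (hC0spec ht)) (continuousOn_inv_add_spectrum hH hα).sqrt δ e
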